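/- Let κ be a weakly compact cardinal. If every Σ¹₁ subset of κ^κ satisfies the Hurewicz dichotomy, then every Σ¹₁ subset of κ^κ is κ-Miller measurable. -/

import Mathlib

open Cardinal Set Topology

universe u

/-- The bounded topology on `K → Y`: basic open sets are determined by an
initial segment of values. -/
def bTop (K : Type u) [LinearOrder K] (Y : Type u) : TopologicalSpace (K → Y) :=
  TopologicalSpace.generateFrom
    {U | ∃ (b : K) (s : K → Y), U = {x | ∀ i, i < b → x i = s i}}

/-- `A` is κ-compact: every open cover (for the bounded topology) has a
subcover of size `< #K`. -/
def KCompact (K : Type u) [LinearOrder K] {Y : Type u} (A : Set (K → Y)) : Prop :=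
  ∀ 𝒰 : Set (Set (K → Y)), (∀ U ∈ 𝒰, IsOpen[bTop K Y] U) → A ⊆ ⋃₀ 𝒰 →
    ∃ 𝒱 ⊆ 𝒰, #𝒱 < #K ∧ A ⊆ ⋃₀ 𝒱

/-- `B` is a `K_κ` subset: a union of κ-many κ-compact sets. -/
def IsKK (K : Type u) [LinearOrder K] (B : Set (K → K)) : Prop :=
  ∃ C : K → Set (K → K), (∀ b, KCompact K (C b)) ∧ B = ⋃ b, C b

/-- Nodes of the tree `Y^{<K}`: sequences of length `b`, for `b : K`. -/
abbrev Nd (K : Type u) [LinearOrder K] (Y : Type u) := Σ b : K, (Set.Iio b → Y)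

/-- Restriction of a node to a smaller length. -/
def ndRes (K : Type u) [LinearOrder K] {Y : Type u} (p : Nd K Y) (c : K) (h : c ≤ p.1) :
    Nd K Y :=
  ⟨c, fun i => p.2 ⟨i.1, lt_of_lt_of_le i.2 h⟩⟩

/-- Restriction of a branch `x : K → Y` to length `b`. -/
def xRes (K : Type u) [LinearOrder K] {Y : Type u} (x : K → Y) (b : K) : Nd K Y :=
  ⟨b, fun i => x i.1⟩

/-- `q` extends `p` as a sequence. -/
def NdExt (K : Type u) [LinearOrder K] {Y : Type u} (q p : Nd K Y) : Prop :=
  ∃ h : p.1 ≤ q.1, ∀ i : Set.Iio p.1, q.2 ⟨i.1, lt_of_lt_of_le i.2 h⟩ = p.2 i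

/-- A subtree of `Y^{<K}`: a set of nodes closed under restriction. -/
def IsSubtree (K : Type u) [LinearOrder K] {Y : Type u} (T : Set (Nd K Y)) : Prop :=
  ∀ p ∈ T, ∀ c, ∀ h : c ≤ p.1, ndRes K p c h ∈ T

/-- The body `[T]`: the set of `K`-branches through `T`. -/
def body (K : Type u) [LinearOrder K] {Y : Type u} (T : Set (Nd K Y)) : Set (K → Y) :=
  {x | ∀ b : K, xRes K x b ∈ T}

/-- `T` is pruned: every node is extended by a branch. -/
def Pruned (K : Type u) [LinearOrder K] {Y : Type u} (T : Set (Nd K Y)) : Prop :=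
  ∀ p ∈ T, ∃ x ∈ body K T, NdExt K (xRes K x p.1) p

/-- `b` is a limit element: not least, and with no immediate predecessor. -/
def IsLimElt (K : Type u) [LinearOrder K] (b : K) : Prop :=
  (∃ c, c < b) ∧ ∀ c, c < b → ∃ d, c < d ∧ d < b

/-- Superclosed: closed under unions of increasing sequences of length `< K`. -/
def Superclosed (K : Type u) [LinearOrder K] {Y : Type u} (T : Set (Nd K Y)) : Prop :=
  ∀ p : Nd K Y, IsLimElt K p.1 → (∀ c, ∀ h : c < p.1, ndRes K p c h.le ∈ T) → p ∈ T

/-- The values at position `p.1` realized by extensions of `p` in `T`, i.e. the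
immediate successors of `p` in `T`. -/
def splitVals (K : Type u) [LinearOrder K] {Y : Type u} (T : Set (Nd K Y)) (p : Nd K Y) :
    Set Y :=
  {a | ∃ q ∈ T, ∃ h : p.1 < q.1,
    (∀ i : Set.Iio p.1, q.2 ⟨i.1, i.2.trans h⟩ = p.2 i) ∧ q.2 ⟨p.1, h⟩ = a}

/-- A perfect tree: a nonempty superclosed subtree in which every node is
extended by a 2-splitting node. -/
def PerfectTree (K : Type u) [LinearOrder K] (T : Set (Nd K K)) : Prop :=
  T.Nonempty ∧ IsSubtree K T ∧ Superclosed K T ∧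
    ∀ p ∈ T, ∃ q ∈ T, NdExt K q p ∧
      ∃ a ∈ splitVals K T q, ∃ a' ∈ splitVals K T q, a ≠ a'

/-- A κ-Miller tree: a nonempty superclosed subtree in which every node is
extended by a κ-splitting node. -/
def MillerTree (K : Type u) [LinearOrder K] (T : Set (Nd K K)) : Prop :=
  T.Nonempty ∧ IsSubtree K T ∧ Superclosed K T ∧
    ∀ p ∈ T, ∃ q ∈ T, NdExt K q p ∧ #K ≤ #(splitVals K T q)

/-- A κ-tree: a subtree of height `K` all of whose levels have size `< #K`. -/
def KTree (K : Type u) [LinearOrder K] {Y : Type u} (T : Set (Nd K Y)) : Prop :=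
  (∀ b : K, ∃ t : Set.Iio b → Y, (⟨b, t⟩ : Nd K Y) ∈ T) ∧
    ∀ b : K, #{t : Set.Iio b → Y | (⟨b, t⟩ : Nd K Y) ∈ T} < #K

/-- A κ-Aronszajn tree: a κ-tree with no branch. -/
def Aronszajn (K : Type u) [LinearOrder K] (S : Set (Nd K K)) : Prop :=
  IsSubtree K S ∧ KTree K S ∧ body K S = ∅

/-- The tree property for `K`: every κ-tree has a branch. -/
def TreeProp (K : Type u) [LinearOrder K] : Prop :=
  ∀ T : Set (Nd K K), IsSubtree K T → KTree K T → (body K T).Nonempty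

/-- weak compactness: inaccessibility together with the tree property. -/
def WComp (K : Type u) [LinearOrder K] : Prop :=
  (#K).IsInaccessible ∧ TreeProp K

/-- `C` is homeomorphic to the generalized Baire space `K → K`. -/
def HomeoToBaire (K : Type u) [LinearOrder K] (C : Set (K → K)) : Prop :=
  letI := bTop K K
  Nonempty (↥C ≃ₜ (K → K))

/-- `C` is homeomorphic to the generalized Cantor space `K → ULift.{u} Bool`. -/
def HomeoToCantor (K : Type u) [LinearOrder K] (C : Set (K → K)) : Prop :=
  letI := bTop K K
  letI : TopologicalSpace (K → ULift.{u} Bool) := bTop K (ULift.{u} Bool)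
  Nonempty (↥C ≃ₜ (K → ULift.{u} Bool))

/-- The Hurewicz dichotomy for `A`. -/
def HD (K : Type u) [LinearOrder K] (A : Set (K → K)) : Prop :=
  (∃ B, IsKK K B ∧ A ⊆ B) ∨
    ∃ C ⊆ A, IsClosed[bTop K K] C ∧ HomeoToBaire K C

/-- The Miller-tree Hurewicz dichotomy for `A`. -/
def MillerHD (K : Type u) [LinearOrder K] (A : Set (K → K)) : Prop :=
  (∃ B, IsKK K B ∧ A ⊆ B) ∨ ∃ T, MillerTree K T ∧ body K T ⊆ A

/-- Σ¹₁ subsets of `K → K`: projections of closed subsets of the product. -/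
def Sigma11 (K : Type u) [LinearOrder K] (A : Set (K → K)) : Prop :=
  letI := bTop K K
  ∃ C : Set ((K → K) × (K → K)), IsClosed C ∧ A = Prod.fst '' C

/-- The κ-perfect set property. -/
def PSP (K : Type u) [LinearOrder K] (A : Set (K → K)) : Prop :=
  #A ≤ #K ∨ ∃ C ⊆ A, IsClosed[bTop K K] C ∧ HomeoToCantor K C

/-- `A ⊆ K → K` is bounded. -/
def BddSet (K : Type u) [LinearOrder K] (A : Set (K → K)) : Prop :=
  ∃ x : K → K, ∀ y ∈ A, ∀ i, y i ≤ x i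

/-- `A ⊆ K → K` is eventually bounded. -/
def EvBddSet (K : Type u) [LinearOrder K] (A : Set (K → K)) : Prop :=
  ∃ x : K → K, ∀ y ∈ A, ∃ b : K, ∀ i, b ≤ i → y i ≤ x i

/-- Nodes of the product tree `K^{<K} × K^{<K}` (pairs of equal length). -/
abbrev PNd (K : Type u) [LinearOrder K] := Σ b : K, (Set.Iio b → K) × (Set.Iio b → K)

/-- Subtree of the product tree: closed under simultaneous restriction. -/
def IsPSubtree (K : Type u) [LinearOrder K] (T : Set (PNd K)) : Prop :=
  ∀ p ∈ T, ∀ c, ∀ h : c ≤ p.1,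
    (⟨c, fun i => p.2.1 ⟨i.1, lt_of_lt_of_le i.2 h⟩,
        fun i => p.2.2 ⟨i.1, lt_of_lt_of_le i.2 h⟩⟩ : PNd K) ∈ T

/-- The projection `p[T]` of the set of branches of a product tree to the first
coordinate. -/
def pProj (K : Type u) [LinearOrder K] (T : Set (PNd K)) : Set (K → K) :=
  {x | ∃ y : K → K, ∀ b : K,
    (⟨b, fun i => x i.1, fun i => y i.1⟩ : PNd K) ∈ T}

/-- An `∃^x`-perfect embedding into a product tree `T`. -/
def PerfEmb (K : Type u) [LinearOrder K] (T : Set (PNd K)) (e : Nd K (ULift.{u} Bool) → PNd K) : Prop :=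
  (∀ u, e u ∈ T) ∧
  (∀ u u' : Nd K (ULift.{u} Bool), ∀ h : u.1 < u'.1,
     (∀ i : Set.Iio u.1, u'.2 ⟨i.1, i.2.trans h⟩ = u.2 i) →
     ∃ h' : (e u).1 < (e u').1,
       (∀ i : Set.Iio (e u).1, (e u').2.1 ⟨i.1, i.2.trans h'⟩ = (e u).2.1 i) ∧
       (∀ i : Set.Iio (e u).1, (e u').2.2 ⟨i.1, i.2.trans h'⟩ = (e u).2.2 i)) ∧
  (∀ u u' : Nd K (ULift.{u} Bool), ¬ NdExt K u u' → ¬ NdExt K u' u →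
     ¬ NdExt K ⟨(e u).1, (e u).2.1⟩ ⟨(e u').1, (e u').2.1⟩ ∧
     ¬ NdExt K ⟨(e u').1, (e u').2.1⟩ ⟨(e u).1, (e u).2.1⟩) ∧
  (∀ u : Nd K (ULift.{u} Bool), IsLimElt K u.1 → ∀ d, d < (e u).1 →
     ∃ c, ∃ h : c < u.1, d < (e (ndRes K u c h.le)).1)

/-- The immediate extension `u⌢⟨a⟩` of a node `u` by a value `a`. -/
def extNd (K : Type u) [LinearOrder K] [SuccOrder K] (u : Nd K K) (a : K) : Nd K K :=
  ⟨Order.succ u.1, fun i => if h : i.1 < u.1 then u.2 ⟨i.1, h⟩ else a⟩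

/-- An `∃^x`-superperfect embedding into a product tree `T`. -/
def SuperPerfEmb (K : Type u) [LinearOrder K] [SuccOrder K] (T : Set (PNd K))
    (e : Nd K K → PNd K) : Prop :=
  (∀ u, e u ∈ T) ∧
  (∀ u u' : Nd K K, ∀ h : u.1 < u'.1,
     (∀ i : Set.Iio u.1, u'.2 ⟨i.1, i.2.trans h⟩ = u.2 i) →
     ∃ h' : (e u).1 < (e u').1,
       (∀ i : Set.Iio (e u).1, (e u').2.1 ⟨i.1, i.2.trans h'⟩ = (e u).2.1 i) ∧
       (∀ i : Set.Iio (e u).1, (e u').2.2 ⟨i.1, i.2.trans h'⟩ = (e u).2.2 i)) ∧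
  (∀ u : Nd K K, IsLimElt K u.1 → ∀ d, d < (e u).1 →
     ∃ c, ∃ h : c < u.1, d < (e (ndRes K u c h.le)).1) ∧
  (∀ u : Nd K K, ∃ γ : K, (e u).1 ≤ γ ∧
     ∃ hlen : ∀ a : K, γ < (e (extNd K u a)).1,
       ∀ a b : K, a ≠ b →
         (∀ i : Set.Iio γ,
           (e (extNd K u a)).2.1 ⟨i.1, i.2.trans (hlen a)⟩ =
           (e (extNd K u b)).2.1 ⟨i.1, i.2.trans (hlen b)⟩) ∧
         (e (extNd K u a)).2.1 ⟨γ, hlen a⟩ ≠ (e (extNd K u b)).2.1 ⟨γ, hlen b⟩)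

/-!
Fix a κ-Miller tree `T` and apply the dichotomy to `A ∩ [T]`.

If `A ∩ [T]` is contained in a `K_κ` set, then it is eventually bounded by some `f`, because
κ-compact sets are bounded. Below `T` there is a κ-Miller tree all of whose branches exceed `f`
cofinally often: take only values above `f` at κ-splitting nodes. Its body misses `A`.

Otherwise there is a closed embedding `φ` of `K → K` whose range `C` is contained in `A ∩ [T]`, and
a κ-Miller tree is built inside the tree of initial segments of `C`. The images under `φ` of the
functions extending a given `z` of bounded domain split κ many times at some node: for `b` outside
the domain, the values `φ (z ∪ {(b, a)})` form a closed discrete set of size κ. If no node split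
κ many times, the tree of initial segments of this set would have small levels, and the tree
property would give an accumulation point. By continuity each immediate successor of the splitting
node is forced by a further bounded extension of `z`, so the construction can be repeated, and it
passes through limits because unions of fewer than κ many bounded sets are bounded.
-/

section Regular

open Order Ordinal

variable {K : Type u} [LinearOrder K] [WellFoundedLT K]

theorem isRegularCardinalOrder_of_mk_Iio_lt (hseg : ∀ b : K, #(Iio b) < #K)
    (hreg : (#K).IsRegular) : IsRegularCardinalOrder K where
  type_lt_le_ord_cof := by
    have hord : ord #K = typeLT K := by
      refine (ord_le_type (· < ·)).antisymm (le_of_forall_lt fun o ho => ?_)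
      obtain ⟨b, rfl⟩ := mem_range_typein_iff (· < ·) |>.2 ho
      exact lt_ord.2 (hseg b)
    rw [← cof_type, ← hord, hreg.cof_ord]

variable [IsRegularCardinalOrder K]

theorem noMaxOrder_of_aleph0_le_mk (h : ℵ₀ ≤ #K) : NoMaxOrder K := by
  have : Nonempty K := mk_ne_zero_iff.1 (aleph0_pos.trans_le h).ne'
  have : NoTopOrder K := one_lt_cof_iff.1 (cof_eq_cardinalMk (α := K) ▸ one_lt_aleph0.trans_le h)
  exact NoTopOrder.to_noMaxOrder K

variable [NoMaxOrder K]

theorem bddAbove_of_mk_lt {s : Set K} (hs : #s < #K) : BddAbove s := by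
  rw [← not_isCofinal_iff_bddAbove]
  exact fun h => ((cof_le h).trans_lt (hs.trans_eq cof_eq_cardinalMk.symm)).false

theorem bddAbove_range_of_mk_lt {ι : Type u} (hι : #ι < #K) (f : ι → K) : BddAbove (range f) :=
  bddAbove_of_mk_lt (mk_range_le.trans_lt hι)

theorem bddAbove_range_of_Iio (b : K) (f : Iio b → K) : BddAbove (range f) :=
  bddAbove_range_of_mk_lt (mk_Iio_lt b ord_cardinalMk) f

variable [Nonempty K]

theorem le_mk_iff_not_bddAbove {s : Set K} : #K ≤ #s ↔ ¬ BddAbove s := by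
  refine ⟨fun h ⟨b, hb⟩ => h.not_gt ?_, fun h => not_lt.1 fun hs => h (bddAbove_of_mk_lt hs)⟩
  have : Infinite K := NoMaxOrder.infinite
  exact (mk_le_mk_of_subset hb).trans_lt (mk_Iic_lt b ord_cardinalMk (aleph0_le_mk K))

end Regular

section Nodes

variable {K : Type u} [LinearOrder K] {Y : Type u} {T : Set (Nd K Y)} {D : Set (K → Y)}
  {x y : K → Y} {b c : K}

theorem xRes_eq_xRes_iff : xRes K x b = xRes K y c ↔ b = c ∧ EqOn x y (Iio b) := by
  refine ⟨fun h => ?_, fun ⟨hbc, h⟩ => hbc ▸ congrArg (Sigma.mk b) (funext fun i => h i.2)⟩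
  obtain rfl : b = c := congrArg Sigma.fst h
  exact ⟨rfl, fun i hi => congrFun (eq_of_heq (Sigma.mk.inj h).2) ⟨i, hi⟩⟩

theorem exists_eq_xRes [Nonempty Y] (p : Nd K Y) : ∃ x b, p = xRes K x b := by
  classical
  obtain ⟨b, s⟩ := p
  refine ⟨fun i => if h : i < b then s ⟨i, h⟩ else Classical.arbitrary Y, b, ?_⟩
  exact congrArg (Sigma.mk b) (funext fun i => by simp [mem_Iio.1 i.2])

theorem ndExt_xRes_xRes_iff : NdExt K (xRes K x b) (xRes K y c) ↔ c ≤ b ∧ EqOn x y (Iio c) := by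
  simp [NdExt, xRes, EqOn]

theorem NdExt.of_le {p : Nd K Y} (h : NdExt K p (xRes K x c)) (hbc : b ≤ c) :
    NdExt K p (xRes K x b) :=
  ⟨hbc.trans h.1, fun i => h.2 ⟨i.1, i.2.trans_le hbc⟩⟩

theorem NdExt.trans {p q r : Nd K Y} (h : NdExt K r q) (h' : NdExt K q p) : NdExt K r p :=
  ⟨h'.1.trans h.1, fun i => (h.2 ⟨i.1, i.2.trans_le h'.1⟩).trans (h'.2 i)⟩

theorem IsSubtree.mem_of_ndExt (hT : IsSubtree K T) {p q : Nd K Y}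
    (hq : q ∈ T) (h : NdExt K q p) : p ∈ T := by
  obtain ⟨hpq, h⟩ := h
  have hres : ndRes K q p.1 hpq = p := congrArg (Sigma.mk p.1) (funext h)
  exact hres ▸ hT q hq p.1 hpq

theorem ndExt_xRes_of_forall_lt [SuccOrder K] [NoMaxOrder K] {p : Nd K Y}
    (h : ∀ d < c, NdExt K p (xRes K x (Order.succ d))) : NdExt K p (xRes K x c) :=
  ⟨le_of_forall_lt fun d hd => (Order.lt_succ d).trans_le (h d hd).1,
    fun i => (h i i.2).2 ⟨i, Order.lt_succ i.1⟩⟩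

theorem mem_splitVals_xRes_iff [Nonempty Y] {a : Y} : a ∈ splitVals K T (xRes K x b) ↔
    ∃ y c, xRes K y c ∈ T ∧ b < c ∧ EqOn y x (Iio b) ∧ y b = a := by
  refine ⟨?_, fun ⟨y, c, hy, hbc, hyx, ha⟩ => ⟨_, hy, hbc, fun i => hyx i.2, ha⟩⟩
  rintro ⟨q, hq, hbc, hqx, ha⟩
  obtain ⟨y, c, rfl⟩ := exists_eq_xRes q
  exact ⟨y, c, hq, hbc, fun i hi => hqx ⟨i, hi⟩, ha⟩

theorem splitVals_mono {T T' : Set (Nd K Y)} (h : T ⊆ T') (p : Nd K Y) :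
    splitVals K T p ⊆ splitVals K T' p :=
  fun _ ⟨q, hq, hpq⟩ => ⟨q, h hq, hpq⟩

/-- The tree of all initial segments of elements of `D`. -/
def segTree (K : Type u) [LinearOrder K] {Y : Type u} (D : Set (K → Y)) : Set (Nd K Y) :=
  {p | ∃ x ∈ D, ∃ b, xRes K x b = p}

theorem xRes_mem_segTree_iff : xRes K x b ∈ segTree K D ↔ ∃ w ∈ D, EqOn w x (Iio b) := by
  refine exists_congr fun w => and_congr_right fun _ => ⟨?_, fun h => ⟨b, ?_⟩⟩
  · rintro ⟨c, hc⟩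
    obtain ⟨rfl, h⟩ := xRes_eq_xRes_iff.1 hc
    exact h
  · exact xRes_eq_xRes_iff.2 ⟨rfl, h⟩

theorem isSubtree_segTree (D : Set (K → Y)) : IsSubtree K (segTree K D) := by
  rintro _ ⟨x, hx, b, rfl⟩ c -
  exact ⟨x, hx, c, rfl⟩

theorem segTree_mono {D' : Set (K → Y)} (h : D ⊆ D') : segTree K D ⊆ segTree K D' :=
  fun _ ⟨x, hx, hxp⟩ => ⟨x, h hx, hxp⟩

theorem segTree_subset (h : D ⊆ body K T) : segTree K D ⊆ T := by
  rintro _ ⟨x, hx, b, rfl⟩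
  exact h hx b

theorem mem_splitVals_segTree_iff [NoMaxOrder K] [Nonempty Y] {a : Y} :
    a ∈ splitVals K (segTree K D) (xRes K x b) ↔ ∃ w ∈ D, EqOn w x (Iio b) ∧ w b = a := by
  rw [mem_splitVals_xRes_iff]
  constructor
  · rintro ⟨y, c, hy, hbc, hyx, rfl⟩
    obtain ⟨w, hw, hwy⟩ := xRes_mem_segTree_iff.1 hy
    exact ⟨w, hw, fun i hi => (hwy (hi.trans hbc)).trans (hyx hi), hwy hbc⟩
  · rintro ⟨w, hw, hwx, rfl⟩
    obtain ⟨c, hc⟩ := exists_gt b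
    exact ⟨w, c, ⟨w, hw, c, rfl⟩, hc, hwx, rfl⟩

end Nodes

section GuidedTree

open Order

variable {K : Type u} [LinearOrder K] [SuccOrder K]

/-- The tree guided by the targets `t` and the admissible values `V`: a branch through `p` has to
run along `t p` as long as `p` is shorter than `t p`, and on reaching `t p` it continues with an
arbitrary value from `V (t p)`. -/
def guidedTree (t : Nd K K → Nd K K) (V : Nd K K → Set K) : Set (Nd K K) :=
  {p | ∀ d (h : d < p.1), NdExt K (t (ndRes K p d h.le)) (ndRes K p (succ d) (succ_le_of_lt h)) ∨
    t (ndRes K p d h.le) = ndRes K p d h.le ∧ p.2 ⟨d, h⟩ ∈ V (ndRes K p d h.le)}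

variable {t : Nd K K → Nd K K} {V : Nd K K → Set K} {x : K → K} {b c : K}

theorem xRes_mem_guidedTree_iff : xRes K x b ∈ guidedTree t V ↔
    ∀ d < b, NdExt K (t (xRes K x d)) (xRes K x (succ d)) ∨
      t (xRes K x d) = xRes K x d ∧ x d ∈ V (xRes K x d) :=
  Iff.rfl

theorem isSubtree_guidedTree : IsSubtree K (guidedTree t V) :=
  fun _ hp _ hc d hd => hp d (hd.trans_le hc)

theorem superclosed_guidedTree : Superclosed K (guidedTree t V) := by
  intro p hp h d hd
  obtain ⟨c, hdc, hc⟩ := hp.2 d hd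
  exact h c hc d hdc

theorem guidedTree_nonempty [OrderBot K] : (guidedTree t V).Nonempty :=
  ⟨xRes K id ⊥, fun _ h => (not_lt_bot h).elim⟩

theorem apply_mem_of_mem_guidedTree [NoMaxOrder K] (hx : xRes K x c ∈ guidedTree t V)
    (hbc : b < c) (hb : t (xRes K x b) = xRes K x b) : x b ∈ V (xRes K x b) := by
  refine (hx b hbc).elim (fun h => ?_) And.right
  change NdExt K (t (xRes K x b)) (xRes K x (succ b)) at h
  rw [hb] at h
  exact ((lt_succ b).not_ge h.1).elim

/-- The conditions under which the guided tree is a κ-Miller tree: the target of a node extends it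
and does not change on the way, and there are κ many admissible values at each target. -/
structure IsGuide (t : Nd K K → Nd K K) (V : Nd K K → Set K) : Prop where
  ndExt : ∀ p ∈ guidedTree t V, NdExt K (t p) p
  coherent : ∀ p ∈ guidedTree t V, ∀ q, NdExt K q p → NdExt K (t p) q → t q = t p
  not_bddAbove : ∀ p ∈ guidedTree t V, ¬ BddAbove (V (t p))

namespace IsGuide

theorem target_mem [Nonempty K] (h : IsGuide t V) {p : Nd K K} (hp : p ∈ guidedTree t V) :
    t p ∈ guidedTree t V := by
  obtain ⟨x, b, rfl⟩ := exists_eq_xRes p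
  obtain ⟨y, c, hy⟩ := exists_eq_xRes (t (xRes K x b))
  obtain ⟨hbc, hyx⟩ := ndExt_xRes_xRes_iff.1 (hy ▸ h.ndExt _ hp)
  rw [hy, xRes_mem_guidedTree_iff]
  rw [← xRes_eq_xRes_iff.2 ⟨rfl, hyx⟩] at hp hy
  intro d hdc
  obtain hdb | hbd := lt_or_ge d b
  · exact hp d hdb
  · refine .inl ?_
    have hd : t (xRes K y d) = xRes K y c := hy ▸ h.coherent _ hp _
      (ndExt_xRes_xRes_iff.2 ⟨hbd, fun _ _ => rfl⟩)
      (hy ▸ ndExt_xRes_xRes_iff.2 ⟨hdc.le, fun _ _ => rfl⟩)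
    exact hd ▸ ndExt_xRes_xRes_iff.2 ⟨succ_le_of_lt hdc, fun _ _ => rfl⟩

theorem target_target (h : IsGuide t V) {p : Nd K K} (hp : p ∈ guidedTree t V) :
    t (t p) = t p :=
  h.coherent p hp _ (h.ndExt p hp) ⟨le_rfl, fun _ => rfl⟩

variable [NoMaxOrder K]

theorem subset_splitVals [Nonempty K] (h : IsGuide t V) {p : Nd K K}
    (hp : p ∈ guidedTree t V) : V (t p) ⊆ splitVals K (guidedTree t V) (t p) := by
  classical
  intro a ha
  have htp := h.target_mem hp
  have htt := h.target_target hp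
  generalize t p = q at ha htp htt
  obtain ⟨x, c, rfl⟩ := exists_eq_xRes q
  have hres : ∀ d ≤ c, xRes K (Function.update x c a) d = xRes K x d := fun d hd =>
    xRes_eq_xRes_iff.2 ⟨rfl, fun i hi => Function.update_of_ne (hi.trans_le hd).ne a x⟩
  refine mem_splitVals_xRes_iff.2 ⟨Function.update x c a, succ c, fun d hd => ?_, lt_succ c,
    (xRes_eq_xRes_iff.1 (hres c le_rfl)).2, Function.update_self ..⟩
  obtain rfl | hdc := (lt_succ_iff.1 hd).eq_or_lt
  · refine .inr ?_
    change t (xRes K (Function.update x d a) d) = xRes K (Function.update x d a) d ∧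
      Function.update x d a d ∈ V (xRes K (Function.update x d a) d)
    rw [hres d le_rfl, Function.update_self]
    exact ⟨htt, ha⟩
  · rw [← hres c le_rfl] at htp
    exact htp d hdc

variable [WellFoundedLT K]

theorem millerTree [OrderBot K] [IsRegularCardinalOrder K] (h : IsGuide t V) :
    MillerTree K (guidedTree t V) :=
  ⟨guidedTree_nonempty, isSubtree_guidedTree, superclosed_guidedTree, fun p hp =>
    ⟨t p, h.target_mem hp, h.ndExt p hp, le_mk_iff_not_bddAbove.2 fun hb =>
      h.not_bddAbove p hp (hb.mono (h.subset_splitVals hp))⟩⟩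

theorem ndExt_target_of_forall (h : IsGuide t V) (hx : x ∈ body K (guidedTree t V))
    (hb : ∀ d ≥ b, NdExt K (t (xRes K x d)) (xRes K x (succ d))) (c : K) :
    NdExt K (t (xRes K x b)) (xRes K x c) := by
  induction c using WellFoundedLT.induction with
  | ind c ih =>
    refine ndExt_xRes_of_forall_lt fun d hdc => ?_
    obtain hdb | hbd := lt_or_ge d b
    · exact (h.ndExt _ (hx b)).of_le (succ_le_of_lt hdb)
    · have hd := h.coherent _ (hx b) _ (ndExt_xRes_xRes_iff.2 ⟨hbd, fun _ _ => rfl⟩) (ih d hdc)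
      exact hd ▸ hb d hbd

theorem exists_target_eq_self (h : IsGuide t V) (hx : x ∈ body K (guidedTree t V)) (b : K) :
    ∃ c ≥ b, t (xRes K x c) = xRes K x c ∧ x c ∈ V (xRes K x c) := by
  by_contra! hns
  have along : ∀ c ≥ b, NdExt K (t (xRes K x c)) (xRes K x (succ c)) := fun c hc =>
    (hx (succ c) c (lt_succ c)).resolve_right fun ⟨h₁, h₂⟩ => hns c hc h₁ h₂
  exact (lt_succ _).not_ge (h.ndExt_target_of_forall hx along (succ (t (xRes K x b)).1)).1

end IsGuide

end GuidedTree

section Cylinders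

variable {α : Type*} {Y : Type*}

/-- The functions `α → Y` that agree with `x` on `s`. For initial segments `s` these are the basic
open sets of the bounded topology. -/
def cylinder (x : α → Y) (s : Set α) : Set (α → Y) :=
  {y | EqOn y x s}

theorem exists_iInter_cylinder_eq [Nonempty Y] {ι : Type*} [LinearOrder ι] {z : ι → α → Y}
    {s : ι → Set α} (h : Antitone fun i => cylinder (z i) (s i)) :
    ∃ w, ⋂ i, cylinder (z i) (s i) = cylinder w (⋃ i, s i) := by
  have compatible {i j : ι} (hij : i ≤ j) : EqOn (z j) (z i) (s i) := h hij fun _ _ => rfl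
  have glue (k : α) : ∃ a, ∀ i, k ∈ s i → z i k = a := by
    by_cases! hk : ∃ i, k ∈ s i
    · obtain ⟨i, hi⟩ := hk
      refine ⟨z i k, fun j hj => ?_⟩
      obtain hij | hji := le_total i j
      · exact compatible hij hi
      · exact (compatible hji hj).symm
    · exact ⟨Classical.arbitrary Y, fun i hi => (hk i hi).elim⟩
  choose w hw using glue
  refine ⟨w, ext fun y => ⟨fun hy k hk => ?_, fun hy => mem_iInter.2 fun i k hk => ?_⟩⟩
  · obtain ⟨i, hi⟩ := mem_iUnion.1 hk
    exact (mem_iInter.1 hy i hi).trans (hw k i hi)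
  · exact (hy (mem_iUnion_of_mem i hk)).trans (hw k i hk).symm

end Cylinders


section BoundedTopology

variable {K : Type u} [LinearOrder K] {Y : Type u}

local instance : TopologicalSpace (K → Y) := bTop K Y

theorem nhds_bTop (x : K → Y) : 𝓝 x = ⨅ b, Filter.principal (cylinder x (Iio b)) := by
  refine TopologicalSpace.nhds_generateFrom.trans ?_
  refine le_antisymm (le_iInf fun b => iInf₂_le _ ⟨fun _ _ => rfl, b, x, rfl⟩) (le_iInf₂ ?_)
  rintro _ ⟨hx, b, y, rfl⟩
  exact iInf_le_of_le b (Filter.principal_mono.2 fun w hw i hi => (hw hi).trans (hx i hi))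

theorem nhds_bTop_hasBasis [Nonempty K] (x : K → Y) :
    (𝓝 x).HasBasis (fun _ => True) fun b => cylinder x (Iio b) := by
  rw [nhds_bTop]
  refine Filter.hasBasis_iInf_principal (directed_of_isDirected_le fun b c hbc w hw => ?_)
  exact hw.mono (Iio_subset_Iio hbc)

theorem isClosed_bTop_iff [Nonempty K] {C : Set (K → Y)} :
    IsClosed C ↔ ∀ x, (∀ b, ∃ w ∈ C, EqOn w x (Iio b)) → x ∈ C := by
  simp only [← closure_subset_iff_isClosed, subset_def,
    mem_closure_iff_nhds_basis (nhds_bTop_hasBasis _), true_imp_iff]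
  rfl

theorem isClosed_body [Nonempty K] (T : Set (Nd K Y)) : IsClosed (body K T) := by
  refine isClosed_bTop_iff.2 fun x hx b => ?_
  obtain ⟨w, hw, hwx⟩ := hx b
  exact xRes_eq_xRes_iff.2 ⟨rfl, hwx⟩ ▸ hw b

theorem body_segTree_subset [Nonempty K] {C : Set (K → Y)} (hC : IsClosed C) :
    body K (segTree K C) ⊆ C :=
  fun x hx => isClosed_bTop_iff.1 hC x fun b => xRes_mem_segTree_iff.1 (hx b)

theorem isOpen_setOf_apply_eq [NoMaxOrder K] (i : K) (a : Y) : IsOpen {x : K → Y | x i = a} := by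
  have : Nonempty K := ⟨i⟩
  refine isOpen_iff_mem_nhds.2 fun x hx => ?_
  obtain ⟨b, hb⟩ := exists_gt i
  exact (nhds_bTop_hasBasis x).mem_iff.2 ⟨b, trivial, fun y hy => (hy hb).trans hx⟩

theorem Sigma11.inter_isClosed {A F : Set (K → K)} (hA : Sigma11 K A) (hF : IsClosed F) :
    Sigma11 K (A ∩ F) := by
  obtain ⟨C, hC, rfl⟩ := hA
  exact ⟨C ∩ Prod.fst ⁻¹' F, hC.inter (hF.preimage continuous_fst),
    (image_inter_preimage Prod.fst C F).symm⟩

end BoundedTopology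

section BoundedSets

open Order

variable {K : Type u} [LinearOrder K] [WellFoundedLT K] [IsRegularCardinalOrder K] [NoMaxOrder K]

theorem KCompact.bddSet {A : Set (K → K)} (hA : KCompact K A) : BddSet K A := by
  suffices ∀ i, ∃ b, ∀ y ∈ A, y i ≤ b by
    choose x hx using this
    exact ⟨x, fun y hy i => hx i y hy⟩
  intro i
  obtain ⟨𝒱, h𝒱, hcard, hA𝒱⟩ := hA (range fun a => {y | y i = a})
    (forall_mem_range.2 (isOpen_setOf_apply_eq i)) fun y _ => ⟨_, ⟨y i, rfl⟩, rfl⟩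
  choose a ha using h𝒱
  obtain ⟨b, hb⟩ := bddAbove_range_of_mk_lt hcard fun U => a U.2
  refine ⟨b, fun y hy => ?_⟩
  obtain ⟨U, hU, hyU⟩ := hA𝒱 hy
  rw [← ha hU] at hyU
  exact hyU.trans_le (hb ⟨⟨U, hU⟩, rfl⟩)

theorem IsKK.evBddSet {B : Set (K → K)} (hB : IsKK K B) : EvBddSet K B := by
  obtain ⟨C, hC, rfl⟩ := hB
  choose g hg using fun b => (hC b).bddSet
  have bdd (i : K) : BddAbove ((g · i) '' Iic i) := by
    have : Nonempty K := ⟨i⟩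
    have : Infinite K := NoMaxOrder.infinite
    exact bddAbove_of_mk_lt
      (mk_image_le.trans_lt (mk_Iic_lt i ord_cardinalMk (aleph0_le_mk K)))
  choose f hf using bdd
  refine ⟨f, fun y hy => ?_⟩
  obtain ⟨b, hyb⟩ := mem_iUnion.1 hy
  exact ⟨b, fun i hbi => (hg b y hyb i).trans (hf i (mem_image_of_mem (g · i) hbi))⟩

end BoundedSets

theorem exists_coherent_choice {ι α : Type*} [Nonempty α] (s : ι → Set α) : ∃ t : ι → α,
    (∀ i, (s i).Nonempty → t i ∈ s i) ∧ ∀ i j, s j ⊆ s i → t i ∈ s j → t j = t i := by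
  obtain ⟨_, _⟩ := exists_wellFoundedLT α
  let _ := WellFoundedLT.toOrderBot α
  let _ := WellFoundedLT.conditionallyCompleteLinearOrderBot α
  refine ⟨fun i => sInf (s i), fun i => csInf_mem, fun i j hji hij => ?_⟩
  exact (csInf_le' hij).antisymm (csInf_le' (hji (csInf_mem ⟨_, hij⟩)))

section BoundedCase

open Order

variable {K : Type u} [LinearOrder K] [WellFoundedLT K] [NoMaxOrder K] [SuccOrder K]
  {T : Set (Nd K K)} {t : Nd K K → Nd K K} {V : Nd K K → Set K}

theorem guidedTree_subset (hne : T.Nonempty) (hsub : IsSubtree K T) (hsup : Superclosed K T)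
    (ht : ∀ p ∈ T, t p ∈ T) (hV : ∀ p ∈ T, V p ⊆ splitVals K T p) : guidedTree t V ⊆ T := by
  intro p hp
  have : Nonempty K := ⟨p.1⟩
  obtain ⟨x, b, rfl⟩ := exists_eq_xRes p
  induction b using WellFoundedLT.induction with
  | ind b ih =>
    have below (d : K) (hd : d < b) : xRes K x d ∈ T :=
      ih d hd (isSubtree_guidedTree _ hp d hd.le)
    obtain hmin | ⟨d, rfl⟩ | hlim := isMin_or_mem_range_succ_or_isSuccLimit b
    · obtain ⟨q, hq⟩ := hne
      exact hsub.mem_of_ndExt hq ⟨hmin.isBot _, fun i => (hmin.not_lt i.2).elim⟩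
    · have hd := below d (lt_succ d)
      obtain h | ⟨-, ha⟩ := xRes_mem_guidedTree_iff.1 hp d (lt_succ d)
      · exact hsub.mem_of_ndExt (ht _ hd) h
      · obtain ⟨y, c, hy, hdc, hyx, hyd⟩ := mem_splitVals_xRes_iff.1 (hV _ hd ha)
        refine hsub.mem_of_ndExt hy (ndExt_xRes_xRes_iff.2 ⟨succ_le_of_lt hdc, fun i hi => ?_⟩)
        obtain rfl | hid := (lt_succ_iff.1 hi).eq_or_lt
        · exact hyd
        · exact hyx hid
    · refine hsup _ ⟨not_isMin_iff.1 hlim.not_isMin, fun c hc => ?_⟩ below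
      exact ⟨succ c, lt_succ c, hlim.succ_lt hc⟩

variable [IsRegularCardinalOrder K]

theorem MillerTree.exists_frequently_lt (hT : MillerTree K T) (f : K → K) :
    ∃ S, MillerTree K S ∧ S ⊆ T ∧ ∀ x ∈ body K S, ∀ b, ∃ c ≥ b, f c < x c := by
  obtain ⟨hne, hsub, hsup, hsplit⟩ := hT
  have : Nonempty K := ⟨hne.some.1⟩
  let _ := WellFoundedLT.toOrderBot K
  obtain ⟨t, ht, hcoh⟩ := exists_coherent_choice fun p : Nd K K =>
    {q | q ∈ T ∧ NdExt K q p ∧ #K ≤ #(splitVals K T q)}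
  replace ht (p) (hp : p ∈ T) := ht p (hsplit p hp)
  have hS : guidedTree t (fun p => splitVals K T p ∩ Ioi (f p.1)) ⊆ T :=
    guidedTree_subset hne hsub hsup (fun p hp => (ht p hp).1) fun _ _ => inter_subset_left
  have guide : IsGuide t (fun p => splitVals K T p ∩ Ioi (f p.1)) := {
    ndExt := fun p hp => (ht p (hS hp)).2.1
    coherent := fun p hp q hqp htq => hcoh p q (fun r hr => ⟨hr.1, hr.2.1.trans hqp, hr.2.2⟩)
      ⟨(ht p (hS hp)).1, htq, (ht p (hS hp)).2.2⟩
    not_bddAbove := fun p hp hb => le_mk_iff_not_bddAbove.1 (ht p (hS hp)).2.2 <|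
      (hb.union bddAbove_Iic).mono fun a ha =>
        (le_or_gt a (f (t p).1)).elim .inr fun hlt => .inl ⟨ha, hlt⟩ }
  refine ⟨_, guide.millerTree, hS, fun x hx b => ?_⟩
  obtain ⟨c, hbc, -, -, hc⟩ := guide.exists_target_eq_self hx b
  exact ⟨c, hbc, hc⟩

theorem MillerTree.exists_inter_eq_empty_of_evBddSet (hT : MillerTree K T) {B : Set (K → K)}
    (hB : EvBddSet K B) : ∃ S, MillerTree K S ∧ S ⊆ T ∧ body K S ∩ B = ∅ := by
  obtain ⟨f, hf⟩ := hB
  obtain ⟨S, hS, hST, hlt⟩ := hT.exists_frequently_lt f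
  refine ⟨S, hS, hST, eq_empty_of_forall_notMem fun x ⟨hxS, hxB⟩ => ?_⟩
  obtain ⟨b, hb⟩ := hf x hxB
  obtain ⟨c, hbc, hc⟩ := hlt x hxS b
  exact (hb c hbc).not_gt hc

end BoundedCase

section Fusion

open Order

variable {K : Type u} [LinearOrder K] {X : Type*}

/-- A strategy for building a κ-Miller tree inside the initial segments of the values of `φ`. The
states are sets of arguments still under consideration; at a state `F` the values of `φ` on `F`
split κ many times at `target F`, and `next F a` is a smaller state on which the values of `φ`
continue `target F` with `a`. States survive fewer than κ many steps by `iInter_mem`. -/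
structure FusionScheme (φ : X → K → K) where
  states : Set (Set X)
  target : Set X → Nd K K
  next : Set X → K → Set X
  iInter_mem : ∀ (c : K) (F : Iio c → Set X), Antitone F → (∀ i, F i ∈ states) →
    ⋂ i, F i ∈ states
  not_bddAbove : ∀ F ∈ states, ¬ BddAbove (splitVals K (segTree K (φ '' F)) (target F))
  next_mem : ∀ F ∈ states, ∀ a ∈ splitVals K (segTree K (φ '' F)) (target F), next F a ∈ states
  next_subset : ∀ F ∈ states, ∀ a ∈ splitVals K (segTree K (φ '' F)) (target F), next F a ⊆ F
  xRes_eq_target : ∀ F ∈ states, ∀ a ∈ splitVals K (segTree K (φ '' F)) (target F),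
    ∀ y ∈ next F a, xRes K (φ y) (target F).1 = target F
  apply_target : ∀ F ∈ states, ∀ a ∈ splitVals K (segTree K (φ '' F)) (target F),
    ∀ y ∈ next F a, φ y (target F).1 = a

namespace FusionScheme

variable {φ : X → K → K} (S : FusionScheme φ)

open Classical in
/-- The state after extending the node `p`, at which the state is `F`, by the value `a`: only at
the target is there something to do. -/
noncomputable def step (F : Set X) (p : Nd K K) (a : K) : Set X :=
  if S.target F = p then S.next F a else F

variable {x : K → K} {b c d : K}

theorem ndExt_target_of_eqOn [NoMaxOrder K] {F : Set X} (hF : F ∈ S.states)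
    (h : ∀ y ∈ F, EqOn (φ y) x (Iio b)) : NdExt K (S.target F) (xRes K x b) := by
  have : Nonempty K := ⟨b⟩
  have hsplit := S.not_bddAbove F hF
  obtain ⟨z, c, hz⟩ := exists_eq_xRes (S.target F)
  rw [hz] at hsplit ⊢
  refine ndExt_xRes_xRes_iff.2 ?_
  obtain hbc | hcb := le_or_gt b c
  · refine ⟨hbc, ?_⟩
    obtain ⟨a, ha⟩ := nonempty_of_not_bddAbove hsplit
    obtain ⟨_, ⟨y, hy, rfl⟩, hyz, -⟩ := mem_splitVals_segTree_iff.1 ha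
    exact (hyz.symm.mono (Iio_subset_Iio hbc)).trans (h y hy)
  · refine (hsplit ⟨x c, fun a ha => ?_⟩).elim
    obtain ⟨_, ⟨y, hy, rfl⟩, -, rfl⟩ := mem_splitVals_segTree_iff.1 ha
    exact (h y hy hcb).le

/-- The state reached at the node `p`. -/
noncomputable def state [WellFoundedLT K] (p : Nd K K) : Set X :=
  ⋂ d : Iio p.1, S.step (state (ndRes K p d.1 d.2.le)) (ndRes K p d.1 d.2.le) (p.2 d)
termination_by wellFounded_lt.wrap p.1
decreasing_by exact d.2

variable [WellFoundedLT K]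

theorem state_xRes (x : K → K) (c : K) : S.state (xRes K x c) =
    ⋂ d : Iio c, S.step (S.state (xRes K x d)) (xRes K x d) (x d) := by
  rw [state]
  rfl

theorem state_subset_step (hdc : d < c) :
    S.state (xRes K x c) ⊆ S.step (S.state (xRes K x d)) (xRes K x d) (x d) := by
  rw [S.state_xRes x c]
  exact iInter_subset _ (⟨d, hdc⟩ : Iio c)

theorem state_eq_of_forall_ne (hbc : b ≤ c)
    (h : ∀ d, b ≤ d → d < c → S.target (S.state (xRes K x d)) ≠ xRes K x d) :
    S.state (xRes K x c) = S.state (xRes K x b) := by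
  induction c using WellFoundedLT.induction with
  | ind c ih =>
    obtain rfl | hbc := hbc.eq_or_lt
    · rfl
    refine (S.state_subset_step hbc |>.trans_eq (if_neg (h b le_rfl hbc))).antisymm ?_
    rw [S.state_xRes x c]
    refine subset_iInter fun ⟨d, hdc⟩ => ?_
    obtain hdb | hbd := lt_or_ge d b
    · exact S.state_subset_step hdb
    · rw [step, if_neg (h d hbd hdc), ih d hdc hbd fun e he hed => h e he (hed.trans hdc)]

theorem state_eq_of_ndExt_target (hbc : b ≤ c)
    (h : NdExt K (S.target (S.state (xRes K x b))) (xRes K x c)) :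
    S.state (xRes K x c) = S.state (xRes K x b) := by
  induction c using WellFoundedLT.induction with
  | ind c ih =>
    refine S.state_eq_of_forall_ne hbc fun d hbd hdc hd => hdc.not_ge ?_
    rw [ih d hdc hbd (h.of_le hdc.le)] at hd
    exact h.1.trans_eq (congrArg Sigma.fst hd)

theorem state_eq_of_ndExt {p q : Nd K K} (hqp : NdExt K q p)
    (htq : NdExt K (S.target (S.state p)) q) : S.state q = S.state p := by
  have : Nonempty K := ⟨p.1⟩
  obtain ⟨x, c, rfl⟩ := exists_eq_xRes q
  obtain ⟨hbc, h⟩ := hqp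
  have hres : xRes K x p.1 = p := congrArg (Sigma.mk p.1) (funext h)
  rw [← hres] at htq ⊢
  exact S.state_eq_of_ndExt_target hbc htq

variable [SuccOrder K]

/-- The tree of all runs of the strategy. -/
def tree : Set (Nd K K) :=
  guidedTree (fun p => S.target (S.state p)) fun p => splitVals K (segTree K (φ '' S.state p)) p

variable [NoMaxOrder K]

variable {S} in
theorem apply_mem_splitVals (hx : xRes K x c ∈ S.tree) (hdc : d < c)
    (hd : S.target (S.state (xRes K x d)) = xRes K x d) :
    x d ∈ splitVals K (segTree K (φ '' S.state (xRes K x d)))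
      (S.target (S.state (xRes K x d))) := by
  rw [hd]
  exact apply_mem_of_mem_guidedTree (V := fun p => splitVals K (segTree K (φ '' S.state p)) p)
    hx hdc hd

theorem state_mem (hx : xRes K x c ∈ S.tree) : S.state (xRes K x c) ∈ S.states := by
  induction c using WellFoundedLT.induction with
  | ind c ih =>
    have below (d : K) (hd : d < c) : S.state (xRes K x d) ∈ S.states :=
      ih d hd (isSubtree_guidedTree _ hx d hd.le)
    rw [S.state_xRes x c]
    refine S.iInter_mem c _ (antitone_iff_forall_lt.2 fun d e hde => ?_) fun ⟨d, hdc⟩ => ?_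
    · refine Subset.trans ?_ (S.state_subset_step hde)
      rw [step]
      split_ifs with he
      · exact S.next_subset _ (below e e.2) _ (apply_mem_splitVals hx e.2 he)
      · rfl
    · rw [step]
      split_ifs with hd
      · exact S.next_mem _ (below d hdc) _ (apply_mem_splitVals hx hdc hd)
      · exact below d hdc

theorem eqOn_of_mem_state (hx : xRes K x c ∈ S.tree) (hdc : d < c)
    (hd : S.target (S.state (xRes K x d)) = xRes K x d) {y : X} (hy : y ∈ S.state (xRes K x c)) :
    EqOn (φ y) x (Iio (succ d)) := by
  have hF : S.state (xRes K x d) ∈ S.states :=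
    S.state_mem (isSubtree_guidedTree _ hx d hdc.le)
  have ha := apply_mem_splitVals hx hdc hd
  replace hy : y ∈ S.next (S.state (xRes K x d)) (x d) :=
    (S.state_subset_step hdc).trans_eq (if_pos hd) hy
  have hyx := S.xRes_eq_target _ hF _ ha y hy
  have hyd := S.apply_target _ hF _ ha y hy
  rw [hd] at hyx hyd
  intro i hi
  obtain rfl | hid := (lt_succ_iff.1 hi).eq_or_lt
  · exact hyd
  · exact (xRes_eq_xRes_iff.1 hyx).2 hid

theorem ndExt_target {p : Nd K K} (hp : p ∈ S.tree) : NdExt K (S.target (S.state p)) p := by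
  have : Nonempty K := ⟨p.1⟩
  obtain ⟨x, c, rfl⟩ := exists_eq_xRes p
  refine ndExt_xRes_of_forall_lt fun d hdc => ?_
  by_cases! hs : ∃ e, d ≤ e ∧ e < c ∧ S.target (S.state (xRes K x e)) = xRes K x e
  · obtain ⟨e, hde, hec, he⟩ := hs
    exact (S.ndExt_target_of_eqOn (S.state_mem hp) fun y hy =>
      S.eqOn_of_mem_state hp hec he hy).of_le (succ_le_succ hde)
  · rw [S.state_eq_of_forall_ne hdc.le hs]
    exact (xRes_mem_guidedTree_iff.1 hp d hdc).resolve_right fun h => hs d le_rfl hdc h.1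

theorem isGuide : IsGuide (fun p => S.target (S.state p))
    fun p => splitVals K (segTree K (φ '' S.state p)) p where
  ndExt _ hp := S.ndExt_target hp
  coherent _ _ _ hqp htq := congrArg S.target (S.state_eq_of_ndExt hqp htq)
  not_bddAbove p hp := by
    have : Nonempty K := ⟨p.1⟩
    obtain ⟨x, c, rfl⟩ := exists_eq_xRes p
    rw [S.state_eq_of_ndExt (S.ndExt_target hp) ⟨le_rfl, fun _ => rfl⟩]
    exact S.not_bddAbove _ (S.state_mem hp)

theorem tree_subset : S.tree ⊆ segTree K (range φ) := by
  intro p hp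
  have : Nonempty K := ⟨p.1⟩
  obtain ⟨a, q, hq, hlt, hqt, -⟩ := nonempty_of_not_bddAbove (S.isGuide.not_bddAbove p hp)
  have hext : NdExt K q p := NdExt.trans ⟨hlt.le, hqt⟩ (S.ndExt_target hp)
  exact segTree_mono (image_subset_range _ _) ((isSubtree_segTree _).mem_of_ndExt hq hext)

end FusionScheme

variable [WellFoundedLT K] [IsRegularCardinalOrder K] [NoMaxOrder K] [SuccOrder K] [OrderBot K]

theorem exists_millerTree_subset_segTree_range {φ : X → K → K} (S : FusionScheme φ) :
    ∃ T, MillerTree K T ∧ T ⊆ segTree K (range φ) :=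
  ⟨S.tree, S.isGuide.millerTree, S.tree_subset⟩

end Fusion

section Splitting

variable {K : Type u} [LinearOrder K]

theorem power_lt_of_isStrongLimit {a b c : Cardinal.{u}} (hc : c.IsStrongLimit) (ha : a < c)
    (hb : b < c) : a ^ b < c :=
  calc a ^ b ≤ (2 ^ a) ^ b := power_le_power_right (cantor a).le
    _ = 2 ^ (a * b) := (power_mul ..).symm
    _ < c := hc.isStrongPrelimit (mul_lt_of_lt hc.aleph0_le ha hb)

variable [WellFoundedLT K] [IsRegularCardinalOrder K] [NoMaxOrder K] {T : Set (Nd K K)}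

theorem mk_level_lt (hlim : (#K).IsStrongLimit) (hT : IsSubtree K T)
    (hbdd : ∀ p, BddAbove (splitVals K T p)) (b : K) :
    #{s : Iio b → K | (⟨b, s⟩ : Nd K K) ∈ T} < #K := by
  have : Nonempty K := ⟨b⟩
  have : Infinite K := infinite_iff.2 hlim.aleph0_le
  choose N hN using hbdd
  induction b using WellFoundedLT.induction with
  | ind b ih =>
    have bound (d : Iio b) : BddAbove (range fun s : {s : Iio d.1 → K | (⟨d, s⟩ : Nd K K) ∈ T} =>
        N ⟨d, s⟩) :=
      bddAbove_range_of_mk_lt (ih d d.2) _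
    choose M hM using bound
    obtain ⟨L, hL⟩ := bddAbove_range_of_Iio b M
    have apply_le (s : Iio b → K) (hs : (⟨b, s⟩ : Nd K K) ∈ T) (d : Iio b) : s d ≤ L :=
      calc s d ≤ N (ndRes K ⟨b, s⟩ d d.2.le) := hN _ ⟨⟨b, s⟩, hs, d.2, fun _ => rfl, rfl⟩
        _ ≤ M d := hM d ⟨⟨_, hT _ hs d d.2.le⟩, rfl⟩
        _ ≤ L := hL ⟨d, rfl⟩
    calc #{s : Iio b → K | (⟨b, s⟩ : Nd K K) ∈ T} ≤ #(Iio b → Iic L) :=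
          mk_le_of_injective (f := fun s d => ⟨s.1 d, apply_le s.1 s.2 d⟩) fun s s' h =>
            Subtype.ext (funext fun d => congrArg Subtype.val (congrFun h d))
      _ = #(Iic L) ^ #(Iio b) := (power_def ..).symm
      _ < #K := power_lt_of_isStrongLimit hlim
          (mk_Iic_lt L ord_cardinalMk (aleph0_le_mk K)) (mk_Iio_lt b ord_cardinalMk)

theorem exists_not_bddAbove_splitVals (hlim : (#K).IsStrongLimit) (htp : TreeProp K)
    {ι : Type u} (hι : #K ≤ #ι) {ψ : ι → K → K}
    (hψ : ∀ x, ∃ b, {a | EqOn (ψ a) x (Iio b)}.Subsingleton) :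
    ∃ p, ¬ BddAbove (splitVals K (segTree K (range ψ)) p) := by
  by_contra! hbdd
  have level_lt := mk_level_lt hlim (isSubtree_segTree _) hbdd
  -- The nodes with at least two extensions among the `ψ a` form a κ-tree without branches.
  let D : Set (Nd K K) := {p | ¬ {a | NdExt K (xRes K (ψ a) p.1) p}.Subsingleton}
  have subtree : IsSubtree K D := fun p hp c hc hsub =>
    hp (hsub.anti fun _ ha => ⟨le_rfl, fun i => ha.2 ⟨i, i.2.trans_le hc⟩⟩)
  have level_nonempty (b : K) : ∃ s : Iio b → K, (⟨b, s⟩ : Nd K K) ∈ D := by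
    by_contra! h
    refine (hι.trans (mk_le_of_injective (f := fun a =>
      (⟨fun i => ψ a i, ψ a, ⟨a, rfl⟩, b, rfl⟩ :
        {s : Iio b → K | (⟨b, s⟩ : Nd K K) ∈ segTree K (range ψ)})) fun a a' haa' => ?_)).not_gt
      (level_lt b)
    have hsub : {a | NdExt K (xRes K (ψ a) b) ⟨b, fun i => ψ a' i⟩}.Subsingleton :=
      not_not.1 (h _)
    have ha : NdExt K (xRes K (ψ a) b) ⟨b, fun i => ψ a' i⟩ :=
      ⟨le_rfl, congrFun (congrArg Subtype.val haa')⟩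
    exact hsub ha ⟨le_rfl, fun _ => rfl⟩
  have subset : D ⊆ segTree K (range ψ) := fun p hp => by
    obtain ⟨a, ha⟩ := (not_subsingleton_iff.1 hp).nonempty
    exact (isSubtree_segTree _).mem_of_ndExt ⟨ψ a, ⟨a, rfl⟩, p.1, rfl⟩ ha
  obtain ⟨x, hx⟩ := htp D subtree
    ⟨level_nonempty, fun b => (mk_le_mk_of_subset (preimage_mono (f := Sigma.mk b) subset)).trans_lt
      (level_lt b)⟩
  obtain ⟨b, hb⟩ := hψ x
  exact hx b (hb.anti fun a ha => (ndExt_xRes_xRes_iff.1 ha).2)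

end Splitting

section ClosedCopies

variable {K : Type u} [LinearOrder K]

local instance : TopologicalSpace (K → K) := bTop K K

variable {φ : (K → K) → K → K}

theorem exists_mapsTo_cylinder [Nonempty K] (hφ : Continuous φ) (y : K → K) (d : K) :
    ∃ b, MapsTo φ (cylinder y (Iio b)) (cylinder (φ y) (Iio d)) := by
  obtain ⟨b, -, hb⟩ := ((nhds_bTop_hasBasis y).tendsto_iff (nhds_bTop_hasBasis (φ y))).1
    (hφ.tendsto y) d trivial
  exact ⟨b, hb⟩

variable [NoMaxOrder K]

theorem exists_forall_apply_eq (hφ : IsClosedEmbedding φ) (x : K → K) (b : K) :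
    ∃ e a, ∀ y, EqOn (φ y) x (Iio e) → y b = a := by
  have : Nonempty K := ⟨b⟩
  by_cases hx : x ∈ range φ
  · obtain ⟨w, rfl⟩ := hx
    have hw : {y | y b = w b} ∈ 𝓝 w := (isOpen_setOf_apply_eq b (w b)).mem_nhds rfl
    rw [hφ.nhds_eq_comap, ((nhds_bTop_hasBasis (φ w)).comap φ).mem_iff] at hw
    obtain ⟨e, -, he⟩ := hw
    exact ⟨e, w b, fun y hy => he hy⟩
  · obtain ⟨e, he⟩ := not_forall.1 (mt (isClosed_bTop_iff.1 hφ.isClosed_range x) hx)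
    exact ⟨e, b, fun y hy => (he ⟨φ y, ⟨y, rfl⟩, hy⟩).elim⟩

theorem exists_cylinder_of_mem_splitVals (hφ : Continuous φ) {z : K → K} {s : Set K}
    (hs : BddAbove s) {p : Nd K K} {a : K}
    (ha : a ∈ splitVals K (segTree K (φ '' cylinder z s)) p) :
    ∃ y s', BddAbove s' ∧ cylinder y s' ⊆ cylinder z s ∧
      ∀ y' ∈ cylinder y s', xRes K (φ y') p.1 = p ∧ φ y' p.1 = a := by
  have : Nonempty K := ⟨a⟩
  obtain ⟨x, c, rfl⟩ := exists_eq_xRes p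
  obtain ⟨_, ⟨y, hy, rfl⟩, hyx, rfl⟩ := mem_splitVals_segTree_iff.1 ha
  obtain ⟨d, hcd⟩ := exists_gt c
  obtain ⟨b, hb⟩ := exists_mapsTo_cylinder hφ y d
  refine ⟨y, s ∪ Iio b, hs.union bddAbove_Iio, fun y' hy' => ?_, fun y' hy' => ?_⟩
  · exact (hy'.mono subset_union_left).trans hy
  · have hφy : EqOn (φ y') (φ y) (Iio d) := hb (hy'.mono subset_union_right)
    exact ⟨xRes_eq_xRes_iff.2 ⟨rfl, (hφy.mono (Iio_subset_Iio hcd.le)).trans hyx⟩, hφy hcd⟩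

variable [WellFoundedLT K] [IsRegularCardinalOrder K]

theorem exists_not_bddAbove_splitVals_image_cylinder (hlim : (#K).IsStrongLimit)
    (htp : TreeProp K) (hφ : IsClosedEmbedding φ) (z : K → K) {s : Set K} (hs : BddAbove s) :
    ∃ p, ¬ BddAbove (splitVals K (segTree K (φ '' cylinder z s)) p) := by
  classical
  obtain ⟨c, hc⟩ := hs
  obtain ⟨b, hcb⟩ := exists_gt c
  have update_mem (a : K) : Function.update z b a ∈ cylinder z s := fun i hi =>
    Function.update_of_ne ((hc hi).trans_lt hcb).ne a z
  have discrete (x : K → K) :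
      ∃ e, {a | EqOn (φ (Function.update z b a)) x (Iio e)}.Subsingleton := by
    obtain ⟨e, a₀, h⟩ := exists_forall_apply_eq hφ x b
    refine ⟨e, subsingleton_of_forall_eq a₀ fun a ha => ?_⟩
    exact (Function.update_self b a z).symm.trans (h (Function.update z b a) ha)
  obtain ⟨p, hp⟩ := exists_not_bddAbove_splitVals hlim htp le_rfl discrete
  refine ⟨p, fun hb => hp (hb.mono (splitVals_mono (segTree_mono ?_) p))⟩
  exact range_subset_iff.2 fun a => mem_image_of_mem φ (update_mem a)

theorem bddAbove_iUnion_of_Iio {c : K} {s : Iio c → Set K} (hs : ∀ i, BddAbove (s i)) :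
    BddAbove (⋃ i, s i) := by
  choose M hM using hs
  obtain ⟨b, hb⟩ := bddAbove_range_of_Iio c M
  exact ⟨b, iUnion_subset fun i k hk => (hM i hk).trans (hb ⟨i, rfl⟩)⟩

theorem nonempty_fusionScheme [Nonempty K] (hlim : (#K).IsStrongLimit) (htp : TreeProp K)
    (hφ : IsClosedEmbedding φ) : Nonempty (FusionScheme φ) := by
  let states : Set (Set (K → K)) := {F | ∃ z s, BddAbove s ∧ F = cylinder z s}
  have iInter_mem (c : K) (F : Iio c → Set (K → K)) (hF : Antitone F) (h : ∀ i, F i ∈ states) :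
      ⋂ i, F i ∈ states := by
    choose z s hs hz using h
    obtain rfl := funext hz
    obtain ⟨w, hw⟩ := exists_iInter_cylinder_eq hF
    exact ⟨w, _, bddAbove_iUnion_of_Iio hs, hw⟩
  have exists_target (F) (hF : F ∈ states) :
      ∃ p, ¬ BddAbove (splitVals K (segTree K (φ '' F)) p) := by
    obtain ⟨z, s, hs, rfl⟩ := hF
    exact exists_not_bddAbove_splitVals_image_cylinder hlim htp hφ z hs
  choose! target not_bddAbove using exists_target
  have exists_next (F) (hF : F ∈ states) (a)
      (ha : a ∈ splitVals K (segTree K (φ '' F)) (target F)) : ∃ G ∈ states, G ⊆ F ∧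
        ∀ y ∈ G, xRes K (φ y) (target F).1 = target F ∧ φ y (target F).1 = a := by
    obtain ⟨z, s, hs, rfl⟩ := hF
    obtain ⟨y, s', hs', hsub, h⟩ := exists_cylinder_of_mem_splitVals hφ.continuous hs ha
    exact ⟨_, ⟨y, s', hs', rfl⟩, hsub, h⟩
  choose! next next_mem next_subset next_spec using exists_next
  exact ⟨{ states, target, next, iInter_mem, not_bddAbove, next_mem, next_subset
           xRes_eq_target := fun F hF a ha y hy => (next_spec F hF a ha y hy).1
           apply_target := fun F hF a ha y hy => (next_spec F hF a ha y hy).2 }⟩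

end ClosedCopies

section Measurability

variable {K : Type u} [LinearOrder K] [WellFoundedLT K]

theorem exists_millerTree_subset_of_homeoToBaire [IsRegularCardinalOrder K] [NoMaxOrder K]
    [SuccOrder K] [OrderBot K] (hlim : (#K).IsStrongLimit) (htp : TreeProp K) {C : Set (K → K)}
    (hC : IsClosed[bTop K K] C) (h : HomeoToBaire K C) :
    ∃ S, MillerTree K S ∧ S ⊆ segTree K C := by
  let _ := bTop K K
  obtain ⟨e⟩ := h
  obtain ⟨F⟩ := nonempty_fusionScheme hlim htp
    (hC.isClosedEmbedding_subtypeVal.comp e.symm.isClosedEmbedding)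
  obtain ⟨S, hS, hSC⟩ := exists_millerTree_subset_segTree_range F
  exact ⟨S, hS, hSC.trans (segTree_mono (range_subset_iff.2 fun x => (e.symm x).2))⟩

theorem miller_measurable_of_hurewicz_general (hseg : ∀ b : K, #(Iio b) < #K)
    (hreg : (#K).IsRegular) (hlim : (#K).IsStrongLimit) (htp : TreeProp K)
    {A : Set (K → K)} {T : Set (Nd K K)} (hT : MillerTree K T) (hHD : HD K (A ∩ body K T)) :
    ∃ S, MillerTree K S ∧ S ⊆ T ∧ (body K S ⊆ A ∨ body K S ∩ A = ∅) := by
  have := isRegularCardinalOrder_of_mk_Iio_lt hseg hreg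
  have := noMaxOrder_of_aleph0_le_mk hreg.aleph0_le
  have : Nonempty K := mk_ne_zero_iff.1 hreg.ne_zero
  let _ := WellFoundedLT.toOrderBot K
  let _ := SuccOrder.ofLinearWellFoundedLT K
  obtain ⟨B, hB, hAB⟩ | ⟨C, hCA, hC, hCK⟩ := hHD
  · obtain ⟨S, hS, hST, hSB⟩ := hT.exists_inter_eq_empty_of_evBddSet hB.evBddSet
    refine ⟨S, hS, hST, .inr (eq_empty_of_forall_notMem fun x ⟨hxS, hxA⟩ => ?_)⟩
    exact hSB.subset ⟨hxS, hAB ⟨hxA, fun b => hST (hxS b)⟩⟩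
  · obtain ⟨S, hS, hSC⟩ := exists_millerTree_subset_of_homeoToBaire hlim htp hC hCK
    refine ⟨S, hS, hSC.trans (segTree_subset fun x hx => (hCA hx).2), .inl fun x hx => ?_⟩
    exact (hCA (body_segTree_subset hC fun b => hSC (hx b))).1

end Measurability

/-- If `K` is weakly compact and all Σ¹₁ subsets of `K → K` satisfy the
Hurewicz dichotomy, then every Σ¹₁ subset is κ-Miller measurable. -/
theorem miller_measurable_of_hurewicz (K : Type u) [LinearOrder K]
    [WellFoundedLT K] (hseg : ∀ b : K, #(Set.Iio b) < #K)
    (hwc : WComp K)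
    (hHD : ∀ A : Set (K → K), Sigma11 K A → HD K A)
    (A : Set (K → K)) (hA : Sigma11 K A) :
    ∀ T, MillerTree K T → ∃ S, MillerTree K S ∧ S ⊆ T ∧
      (body K S ⊆ A ∨ body K S ∩ A = ∅) := by
  intro T hT
  have : Nonempty K := mk_ne_zero_iff.1 hwc.1.ne_zero
  exact miller_measurable_of_hurewicz_general hseg hwc.1.isRegular hwc.1.isStrongLimit hwc.2 hT
    (hHD _ (hA.inter_isClosed (isClosed_body T)))
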